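/- (Proposition 2.4 of the paper.) Let 0 < a < b, set c = (a+b)/2 and h = (b−a)/2, and define g(t) = (c + h t)^{−1/2} and q(t) = (c + h t)^{−1} for t ∈ [−1, 1]. Let ρ be any real number with 1 < ρ < c/h + √((c/h)² − 1). Then the degree-k₁ truncated Chebyshev expansion g_{k₁} of g and the degree-k₂ truncated Chebyshev expansion q_{k₂} of q satisfy ‖g − g_{k₁}‖_C ≤ √(2π/(ρ² − 1)) · ρ^{−k₁} / √(c − h (ρ + ρ⁻¹)/2) and ‖q − q_{k₂}‖_C ≤ √(2π/(ρ² − 1)) · ρ^{−k₂} / (c − h (ρ + ρ⁻¹)/2), where ‖p‖_C = (∫_{−1}^{1} p(s)²/√(1 − s²) ds)^{1/2} is the Chebyshev weighted L² norm. -/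

import Mathlib

open Polynomial intervalIntegral

/-- The Chebyshev weighted `L²` norm `‖p‖_C = (∫_{−1}^{1} p(s)²/√(1−s²) ds)^{1/2}`. -/
noncomputable def chebNorm (p : ℝ → ℝ) : ℝ :=
  Real.sqrt (∫ s in (-1 : ℝ)..1, p s ^ 2 / Real.sqrt (1 - s ^ 2))

/-!
Under `s = cos θ` the Chebyshev expansion of `f` becomes the Fourier expansion of the even function
`θ ↦ f (cos θ)`, so Parseval's identity reads `‖f - f_k‖_C² = (π / 2) ∑_{n > k} γ_n²`. If `f`
extends to a function that is holomorphic and bounded by `M` on the Bernstein ellipse, the image of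
the annulus `1 ≤ ‖z‖ ≤ ρ` under `z ↦ (z + z⁻¹) / 2`, then for `n ≥ 1` the coefficient `γ_n` is twice
a Laurent coefficient of its pullback to the annulus; evaluating that coefficient on `‖z‖ = ρ` gives
`|γ_n| ≤ 2 M ρ⁻ⁿ`, and the geometric series sums to the claim. On the ellipse
`Re (c + h w) ≥ c - h (ρ + ρ⁻¹) / 2`, which bounds the negative powers of `c + h w`.
-/

section

open Real Set Metric Polynomial.Chebyshev

/-- The Chebyshev coefficient `γ_n` of `f`; the conditional is the Kronecker delta `δ_{n0}`. -/
noncomputable def chebCoeff (f : ℝ → ℝ) (n : ℕ) : ℝ :=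
  ((2 - if n = 0 then 1 else 0) / π) *
    ∫ s in (-1 : ℝ)..1, f s * (T ℝ n).eval s / √(1 - s ^ 2)

/-- The truncated Chebyshev expansion `f_k` of `f`, of degree `k` inclusive. -/
noncomputable def chebSum (f : ℝ → ℝ) (k : ℕ) (t : ℝ) : ℝ :=
  ∑ i ∈ Finset.range (k + 1), chebCoeff f i * (T ℝ i).eval t

/-- The Joukowski map, which sends the unit circle onto `[-1, 1]`. -/
noncomputable def joukowski (z : ℂ) : ℂ := (z + z⁻¹) / 2

/-- The closed region bounded by the Bernstein ellipse with foci `±1` and semi-axes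
`(ρ ± ρ⁻¹) / 2`, parametrized by the annulus `1 ≤ ‖z‖ ≤ ρ`. -/
def bernsteinEllipse (ρ : ℝ) : Set ℂ := joukowski '' (closedBall 0 ρ \ ball 0 1)

lemma integral_div_sqrt_one_sub_sq (f : ℝ → ℝ) :
    ∫ s in (-1 : ℝ)..1, f s / √(1 - s ^ 2) = ∫ θ in (0 : ℝ)..π, f (cos θ) := by
  rw [← integral_measureT_eq_integral_cos, integral_measureT]
  simp only [div_eq_mul_inv, sqrt_inv]

lemma chebNorm_sq (p : ℝ → ℝ) : chebNorm p ^ 2 = ∫ θ in (0 : ℝ)..π, p (cos θ) ^ 2 := by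
  rw [chebNorm, integral_div_sqrt_one_sub_sq (fun s => p s ^ 2), sq_sqrt]
  exact integral_nonneg pi_nonneg fun θ _ => sq_nonneg _

lemma chebCoeff_eq_integral_cos (f : ℝ → ℝ) (n : ℕ) :
    chebCoeff f n =
      ((2 - if n = 0 then 1 else 0) / π) * ∫ θ in (0 : ℝ)..π, f (cos θ) * cos (n * θ) := by
  rw [chebCoeff, integral_div_sqrt_one_sub_sq (fun s => f s * (T ℝ n).eval s)]
  simp only [T_real_cos, Int.cast_natCast]

lemma chebCoeff_T (i n : ℕ) :
    chebCoeff (fun s => (T ℝ i).eval s) n = if n = i then 1 else 0 := by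
  rw [chebCoeff, integral_div_sqrt_one_sub_sq (fun s => (T ℝ i).eval s * (T ℝ n).eval s),
    ← integral_measureT_eq_integral_cos (f := fun s => (T ℝ i).eval s * (T ℝ n).eval s)]
  rcases eq_or_ne n i with rfl | hni
  · rcases eq_or_ne n 0 with rfl | hn
    · rw [Nat.cast_zero, integral_eval_T_real_mul_self_measureT_zero]
      norm_num [pi_ne_zero]
    · rw [integral_T_real_mul_self_measureT_of_ne_zero hn]
      simp [hn, pi_ne_zero]
  · rw [integral_eval_T_real_mul_eval_T_real_measureT_of_ne hni.symm, if_neg hni, mul_zero]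

lemma continuous_comp_cos {f : ℝ → ℝ} (hf : ContinuousOn f (Icc (-1) 1)) :
    Continuous fun θ : ℝ => f (cos θ) :=
  hf.comp_continuous continuous_cos cos_mem_Icc

lemma intervalIntegrable_comp_cos_mul_cos {f : ℝ → ℝ} (hf : ContinuousOn f (Icc (-1) 1)) (x : ℝ) :
    IntervalIntegrable (fun θ => f (cos θ) * cos (x * θ)) MeasureTheory.volume 0 π :=
  ((continuous_comp_cos hf).mul (by fun_prop)).intervalIntegrable _ _

lemma continuous_chebSum (f : ℝ → ℝ) (k : ℕ) : Continuous (chebSum f k) := by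
  unfold chebSum
  fun_prop

lemma chebCoeff_sub {f g : ℝ → ℝ} (hf : ContinuousOn f (Icc (-1) 1))
    (hg : ContinuousOn g (Icc (-1) 1)) (n : ℕ) :
    chebCoeff (fun t => f t - g t) n = chebCoeff f n - chebCoeff g n := by
  simp only [chebCoeff_eq_integral_cos, sub_mul]
  rw [integral_sub (intervalIntegrable_comp_cos_mul_cos hf _)
    (intervalIntegrable_comp_cos_mul_cos hg _), mul_sub]

lemma chebCoeff_sum_mul {ι : Type*} (S : Finset ι) (a : ι → ℝ) {f : ι → ℝ → ℝ}
    (hf : ∀ i ∈ S, ContinuousOn (f i) (Icc (-1) 1)) (n : ℕ) :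
    chebCoeff (fun t => ∑ i ∈ S, a i * f i t) n = ∑ i ∈ S, a i * chebCoeff (f i) n := by
  simp only [chebCoeff_eq_integral_cos, Finset.sum_mul, mul_assoc]
  rw [integral_finsetSum fun i hi =>
    (intervalIntegrable_comp_cos_mul_cos (hf i hi) _).const_mul _, Finset.mul_sum]
  simp only [integral_const_mul, mul_left_comm]

lemma chebCoeff_chebSum (f : ℝ → ℝ) (k n : ℕ) :
    chebCoeff (chebSum f k) n = if n ≤ k then chebCoeff f n else 0 := by
  calc chebCoeff (chebSum f k) n
      = ∑ i ∈ Finset.range (k + 1), chebCoeff f i * chebCoeff (fun s => (T ℝ i).eval s) n :=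
        chebCoeff_sum_mul _ _ (f := fun i s => (T ℝ (i : ℕ)).eval s)
          (fun i _ => (T ℝ i).continuous.continuousOn) n
    _ = if n ≤ k then chebCoeff f n else 0 := by
        simp only [chebCoeff_T, mul_ite, mul_one, mul_zero, Finset.sum_ite_eq, Finset.mem_range,
          Order.lt_add_one_iff]

lemma chebCoeff_sub_chebSum {f : ℝ → ℝ} (hf : ContinuousOn f (Icc (-1) 1)) (k n : ℕ) :
    chebCoeff (fun t => f t - chebSum f k t) n = if n ≤ k then 0 else chebCoeff f n := by
  rw [chebCoeff_sub hf (continuous_chebSum f k).continuousOn, chebCoeff_chebSum]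
  split_ifs <;> simp

lemma integral_zero_two_mul_eq_integral_add_reflect {E : Type*} [NormedAddCommGroup E]
    [NormedSpace ℝ E] {φ : ℝ → E} (hφ : Continuous φ) (b : ℝ) :
    ∫ θ in (0 : ℝ)..(2 * b), φ θ = ∫ θ in (0 : ℝ)..b, (φ θ + φ (2 * b - θ)) := by
  rw [integral_add (hφ.intervalIntegrable _ _)
      (Continuous.intervalIntegrable (by fun_prop) _ _),
    integral_comp_sub_left (fun θ => φ θ), sub_zero, show 2 * b - b = b by ring,
    integral_add_adjacent_intervals (hφ.intervalIntegrable _ _) (hφ.intervalIntegrable _ _)]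

lemma fourierCoeffOn_two_pi (φ : ℝ → ℂ) (n : ℤ) :
    fourierCoeffOn two_pi_pos φ n =
      (2 * π : ℂ)⁻¹ * ∫ θ in (0 : ℝ)..(2 * π), circleMap 0 1 θ ^ (-n) * φ θ := by
  have fourier_eq : ∀ θ : ℝ,
      fourier (-n) (θ : AddCircle (2 * π - 0)) = circleMap 0 1 θ ^ (-n) := fun θ => by
    rw [fourier_coe_apply, circleMap_zero_zpow, circleMap_zero]
    have hπ : (π : ℂ) ≠ 0 := Complex.ofReal_ne_zero.mpr pi_ne_zero
    push_cast
    rw [one_zpow, one_mul]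
    congr 1
    field_simp
    ring
  simp only [fourierCoeffOn_eq_integral, fourier_eq, smul_eq_mul, sub_zero, one_div,
    Complex.real_smul]
  push_cast
  rfl

lemma circleMap_zero_one_zpow_add_zpow_neg (θ : ℝ) (n : ℤ) :
    circleMap 0 1 θ ^ n + circleMap 0 1 θ ^ (-n) = ((2 * cos (n * θ) : ℝ) : ℂ) := by
  rw [circleMap_zero_zpow, circleMap_zero_zpow]
  simp only [circleMap_zero, one_zpow, Complex.ofReal_one, one_mul]
  push_cast
  rw [Complex.two_cos, neg_mul]

lemma fourierCoeffOn_comp_cos {f : ℝ → ℝ} (hf : ContinuousOn f (Icc (-1) 1)) (n : ℤ) :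
    fourierCoeffOn two_pi_pos (fun θ => (f (cos θ) : ℂ)) n =
      ((π⁻¹ * ∫ θ in (0 : ℝ)..π, f (cos θ) * cos (n * θ) : ℝ) : ℂ) := by
  have hf_cos := continuous_comp_cos hf
  have circleMap_reflect : ∀ θ : ℝ,
      circleMap 0 1 (2 * π - θ) ^ (-n) = circleMap 0 1 θ ^ n := fun θ => by
    rw [zpow_neg, ← inv_zpow]
    congr 1
    simp [circleMap_zero, sub_mul, Complex.exp_sub, Complex.exp_two_pi_mul_I]
  have integrand_eq : ∀ θ : ℝ, circleMap 0 1 θ ^ (-n) * (f (cos θ) : ℂ) +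
      circleMap 0 1 (2 * π - θ) ^ (-n) * (f (cos (2 * π - θ)) : ℂ) =
        ((2 * (f (cos θ) * cos (n * θ)) : ℝ) : ℂ) := fun θ => by
    rw [circleMap_reflect, cos_two_pi_sub, ← add_mul, add_comm,
      circleMap_zero_one_zpow_add_zpow_neg]
    push_cast
    ring
  have hcont : Continuous fun θ : ℝ => circleMap 0 1 θ ^ (-n) * (f (cos θ) : ℂ) :=
    ((continuous_circleMap 0 1).zpow₀ _ fun θ => .inl (circleMap_ne_center one_ne_zero)).mul
      (Complex.continuous_ofReal.comp hf_cos)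
  rw [fourierCoeffOn_two_pi, integral_zero_two_mul_eq_integral_add_reflect hcont]
  simp only [integrand_eq]
  rw [intervalIntegral.integral_ofReal, integral_const_mul]
  push_cast
  ring

lemma fourierCoeffOn_comp_cos_neg {f : ℝ → ℝ} (hf : ContinuousOn f (Icc (-1) 1)) (n : ℤ) :
    fourierCoeffOn two_pi_pos (fun θ => (f (cos θ) : ℂ)) (-n) =
      fourierCoeffOn two_pi_pos (fun θ => (f (cos θ) : ℂ)) n := by
  simp only [fourierCoeffOn_comp_cos hf, Int.cast_neg, neg_mul, cos_neg]

lemma ofReal_chebCoeff {f : ℝ → ℝ} (hf : ContinuousOn f (Icc (-1) 1)) (n : ℕ) :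
    (chebCoeff f n : ℂ) = ((2 - if n = 0 then 1 else 0 : ℝ) : ℂ) *
      fourierCoeffOn two_pi_pos (fun θ => (f (cos θ) : ℂ)) n := by
  rw [fourierCoeffOn_comp_cos hf, chebCoeff_eq_integral_cos, ← Complex.ofReal_mul,
    Int.cast_natCast, div_eq_mul_inv, mul_assoc]

lemma abs_chebCoeff_eq_norm_fourierCoeffOn {f : ℝ → ℝ} (hf : ContinuousOn f (Icc (-1) 1)) (n : ℕ) :
    |chebCoeff f n| = (2 - if n = 0 then 1 else 0) *
      ‖fourierCoeffOn two_pi_pos (fun θ => (f (cos θ) : ℂ)) n‖ := by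
  rw [← norm_eq_abs, ← Complex.norm_real, ofReal_chebCoeff hf, norm_mul, Complex.norm_real,
    norm_of_nonneg (by split_ifs <;> norm_num)]

lemma hasSum_nat_of_even {u : ℤ → ℝ} {S : ℝ} (hu : HasSum u S) (heven : ∀ n, u (-n) = u n) :
    HasSum (fun n : ℕ => (2 - if n = 0 then 1 else 0) * u n) S := by
  have hsum := hu.nat_add_neg.sub (hasSum_ite_eq 0 (u 0))
  rw [add_sub_cancel_right] at hsum
  refine hsum.congr_fun fun n => ?_
  rcases eq_or_ne n 0 with rfl | hn
  · simp only [if_true, Nat.cast_zero, neg_zero]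
    ring
  · rw [if_neg hn, if_neg hn, heven]
    ring

/-- The weight `π / (2 - δ_{n0})` is `‖T_n‖_C²`. -/
theorem hasSum_sq_chebCoeff {f : ℝ → ℝ} (hf : ContinuousOn f (Icc (-1) 1)) :
    HasSum (fun n : ℕ => π / (2 - if n = 0 then 1 else 0) * chebCoeff f n ^ 2)
      (chebNorm f ^ 2) := by
  have hcont : Continuous fun θ : ℝ => (f (cos θ) : ℂ) :=
    Complex.continuous_ofReal.comp (continuous_comp_cos hf)
  have hcont_sq : Continuous fun θ : ℝ => ‖(f (cos θ) : ℂ)‖ ^ 2 := hcont.norm.pow 2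
  have integral_norm_sq : ∫ θ in (0 : ℝ)..(2 * π), ‖(f (cos θ) : ℂ)‖ ^ 2 =
      2 * chebNorm f ^ 2 := by
    rw [integral_zero_two_mul_eq_integral_add_reflect hcont_sq, chebNorm_sq,
      ← integral_const_mul]
    simp only [cos_two_pi_sub, Complex.norm_real, norm_eq_abs, sq_abs, ← two_mul]
  have memLp_two : MeasureTheory.MemLp (fun θ : ℝ => (f (cos θ) : ℂ)) 2
      (MeasureTheory.volume.restrict (Ioc 0 (2 * π))) :=
    (MeasureTheory.memLp_two_iff_integrable_sq_norm hcont.aestronglyMeasurable).mpr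
      hcont_sq.integrableOn_Ioc
  have parseval := (hasSum_nat_of_even (hasSum_sq_fourierCoeffOn two_pi_pos memLp_two)
    fun n => by rw [fourierCoeffOn_comp_cos_neg hf]).mul_left π
  have total_eq : π * (2 * π - 0)⁻¹ • (2 * chebNorm f ^ 2) = chebNorm f ^ 2 := by
    rw [sub_zero, smul_eq_mul]
    field_simp
  rw [integral_norm_sq, total_eq] at parseval
  refine parseval.congr_fun fun n => ?_
  have weight_pos : (0 : ℝ) < 2 - if n = 0 then 1 else 0 := by split_ifs <;> norm_num
  rw [← sq_abs (chebCoeff f n), abs_chebCoeff_eq_norm_fourierCoeffOn hf]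
  field_simp

theorem hasSum_sq_chebCoeff_tail {f : ℝ → ℝ} (hf : ContinuousOn f (Icc (-1) 1)) (k : ℕ) :
    HasSum (fun j : ℕ => π / 2 * chebCoeff f (j + (k + 1)) ^ 2)
      (chebNorm (fun t => f t - chebSum f k t) ^ 2) := by
  have parseval := hasSum_sq_chebCoeff (hf.sub (continuous_chebSum f k).continuousOn)
  simp only [Pi.sub_def, chebCoeff_sub_chebSum hf] at parseval
  rw [← hasSum_nat_add_iff' (k + 1), Finset.sum_eq_zero fun i hi => by
    rw [if_pos (Finset.mem_range_succ_iff.mp hi), zero_pow two_ne_zero, mul_zero],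
    sub_zero] at parseval
  refine parseval.congr_fun fun j => ?_
  rw [if_neg (by lia), if_neg (by lia), sub_zero]

theorem chebNorm_sub_chebSum_le_of_abs_chebCoeff_le {f : ℝ → ℝ} {ρ M : ℝ} {k : ℕ}
    (hf : ContinuousOn f (Icc (-1) 1)) (hρ : 1 < ρ)
    (hcoeff : ∀ n > k, |chebCoeff f n| ≤ 2 * (M * ρ ^ (-(n : ℤ)))) :
    chebNorm (fun t => f t - chebSum f k t) ≤
      √(2 * π / (ρ ^ 2 - 1)) * ρ ^ (-(k : ℤ)) * M := by
  have hρ_pos : 0 < ρ := one_pos.trans hρ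
  have hρ_sq : 0 < ρ ^ 2 - 1 := sub_pos.mpr (one_lt_pow₀ hρ two_ne_zero)
  have hM : 0 ≤ M := by
    have h := (abs_nonneg _).trans (hcoeff (k + 1) k.lt_succ_self)
    exact nonneg_of_mul_nonneg_left (nonneg_of_mul_nonneg_right h two_pos) (by positivity)
  have term_le : ∀ j : ℕ, π / 2 * chebCoeff f (j + (k + 1)) ^ 2 ≤
      2 * π * (M * ρ ^ (-(k + 1 : ℤ))) ^ 2 * (ρ ^ 2)⁻¹ ^ j := fun j => by
    calc π / 2 * chebCoeff f (j + (k + 1)) ^ 2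
        ≤ π / 2 * (2 * (M * ρ ^ (-((j + (k + 1) : ℕ) : ℤ)))) ^ 2 := by
          rw [← sq_abs (chebCoeff f _)]
          gcongr
          exact hcoeff _ (by lia)
      _ = 2 * π * (M * ρ ^ (-(k + 1 : ℤ))) ^ 2 * (ρ ^ 2)⁻¹ ^ j := by
          push_cast
          rw [neg_add (j : ℤ), zpow_add₀ hρ_pos.ne', zpow_neg ρ j, zpow_natCast, inv_pow,
            ← pow_mul, mul_comm 2 j, pow_mul]
          ring
  have geometric := (hasSum_geometric_of_lt_one (r := (ρ ^ 2)⁻¹) (by positivity)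
    (inv_lt_one_of_one_lt₀ (sub_pos.mp hρ_sq))).mul_left (2 * π * (M * ρ ^ (-(k + 1 : ℤ))) ^ 2)
  refine le_of_sq_le_sq ?_ (by positivity)
  calc chebNorm (fun t => f t - chebSum f k t) ^ 2
      ≤ 2 * π * (M * ρ ^ (-(k + 1 : ℤ))) ^ 2 * (1 - (ρ ^ 2)⁻¹)⁻¹ :=
        hasSum_le term_le (hasSum_sq_chebCoeff_tail hf k) geometric
    _ = 2 * π / (ρ ^ 2 - 1) * (ρ ^ (-(k : ℤ))) ^ 2 * M ^ 2 := by
        rw [neg_add, zpow_add₀ hρ_pos.ne', zpow_neg_one,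
          show 1 - (ρ ^ 2)⁻¹ = (ρ ^ 2 - 1) / ρ ^ 2 by field_simp]
        field_simp
    _ = (√(2 * π / (ρ ^ 2 - 1)) * ρ ^ (-(k : ℤ)) * M) ^ 2 := by
        rw [mul_pow, mul_pow, sq_sqrt (by positivity)]

lemma fourierCoeffOn_comp_circleMap (Φ : ℂ → ℂ) (n : ℤ) :
    fourierCoeffOn two_pi_pos (fun θ => Φ (circleMap 0 1 θ)) n =
      (2 * π * Complex.I : ℂ)⁻¹ • ∮ z in C(0, 1), z ^ (-n - 1) * Φ z := by
  have integrand_eq : ∀ θ : ℝ, deriv (circleMap 0 1) θ •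
      (circleMap 0 1 θ ^ (-n - 1) * Φ (circleMap 0 1 θ)) =
        Complex.I * (circleMap 0 1 θ ^ (-n) * Φ (circleMap 0 1 θ)) := fun θ => by
    have hθ : circleMap 0 1 θ ≠ 0 := circleMap_ne_center one_ne_zero
    rw [deriv_circleMap, smul_eq_mul, zpow_sub_one₀ hθ]
    field_simp
  simp only [fourierCoeffOn_two_pi, circleIntegral, integrand_eq, integral_const_mul, smul_eq_mul]
  have hI := Complex.I_ne_zero
  field_simp

theorem norm_fourierCoeffOn_comp_circleMap_le {Φ : ℂ → ℂ} {ρ M : ℝ} (hρ : 1 ≤ ρ)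
    (hΦ : ∀ z ∈ closedBall 0 ρ \ ball 0 1, DifferentiableAt ℂ Φ z)
    (hM : ∀ z ∈ sphere 0 ρ, ‖Φ z‖ ≤ M) (n : ℤ) :
    ‖fourierCoeffOn two_pi_pos (fun θ => Φ (circleMap 0 1 θ)) n‖ ≤ M * ρ ^ (-n) := by
  have hρ_pos : 0 < ρ := one_pos.trans_le hρ
  have hdiff : ∀ z ∈ closedBall (0 : ℂ) ρ \ ball 0 1,
      DifferentiableAt ℂ (fun z => z ^ (-n - 1) * Φ z) z := fun z hz =>
    (differentiableAt_zpow.mpr <| .inl fun hz0 => hz.2 (by simp [hz0])).mul (hΦ z hz)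
  have contour_shift : (∮ z in C(0, ρ), z ^ (-n - 1) * Φ z) = ∮ z in C(0, 1), z ^ (-n - 1) * Φ z :=
    Complex.circleIntegral_eq_of_differentiable_on_annulus_off_countable one_pos hρ
      countable_empty (fun z hz => (hdiff z hz).continuousAt.continuousWithinAt)
      (fun z hz => hdiff z
        ⟨ball_subset_closedBall hz.1.1, fun hz1 => hz.1.2 (ball_subset_closedBall hz1)⟩)
  have hbound : ∀ z ∈ sphere (0 : ℂ) ρ, ‖z ^ (-n - 1) * Φ z‖ ≤ ρ ^ (-n - 1) * M := fun z hz => by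
    rw [norm_mul, norm_zpow, mem_sphere_zero_iff_norm.mp hz]
    gcongr
    exact hM z hz
  calc ‖fourierCoeffOn two_pi_pos (fun θ => Φ (circleMap 0 1 θ)) n‖
      ≤ ρ * (ρ ^ (-n - 1) * M) := by
        rw [fourierCoeffOn_comp_circleMap, ← contour_shift]
        exact circleIntegral.norm_two_pi_i_inv_smul_integral_le_of_norm_le_const hρ_pos.le hbound
    _ = M * ρ ^ (-n) := by
        rw [zpow_sub_one₀ hρ_pos.ne']
        field_simp

lemma joukowski_circleMap (θ : ℝ) : joukowski (circleMap 0 1 θ) = (cos θ : ℝ) := by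
  have hadd := circleMap_zero_one_zpow_add_zpow_neg θ 1
  rw [zpow_neg, zpow_one, Int.cast_one, one_mul] at hadd
  rw [joukowski, hadd]
  push_cast
  ring

lemma differentiableAt_joukowski {z : ℂ} (hz : z ≠ 0) : DifferentiableAt ℂ joukowski z :=
  (differentiableAt_id.add (differentiableAt_inv hz)).div_const 2

lemma norm_le_of_mem_bernsteinEllipse {ρ : ℝ} {w : ℂ} (hw : w ∈ bernsteinEllipse ρ) :
    ‖w‖ ≤ (ρ + ρ⁻¹) / 2 := by
  obtain ⟨z, ⟨hzρ, hz1⟩, rfl⟩ := hw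
  rw [mem_closedBall_zero_iff] at hzρ
  rw [mem_ball_zero_iff, not_lt] at hz1
  have hz_pos : 0 < ‖z‖ := one_pos.trans_le hz1
  have hρ_pos : 0 < ρ := hz_pos.trans_le hzρ
  have gap_eq : ρ + ρ⁻¹ - (‖z‖ + ‖z‖⁻¹) = (ρ - ‖z‖) * (1 - ρ⁻¹ * ‖z‖⁻¹) := by
    field_simp
    ring
  have gap_nonneg : 0 ≤ (ρ - ‖z‖) * (1 - ρ⁻¹ * ‖z‖⁻¹) :=
    mul_nonneg (sub_nonneg.mpr hzρ) <| sub_nonneg.mpr <|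
      mul_le_one₀ (inv_le_one_of_one_le₀ (hz1.trans hzρ)) (by positivity)
        (inv_le_one_of_one_le₀ hz1)
  calc ‖joukowski z‖ = ‖z + z⁻¹‖ / 2 := by simp [joukowski]
    _ ≤ (‖z‖ + ‖z‖⁻¹) / 2 := by
      rw [← norm_inv]
      gcongr
      exact norm_add_le _ _
    _ ≤ (ρ + ρ⁻¹) / 2 := by linarith

lemma ofReal_mem_bernsteinEllipse {ρ t : ℝ} (hρ : 1 ≤ ρ) (ht : t ∈ Icc (-1) 1) :
    (t : ℂ) ∈ bernsteinEllipse ρ := by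
  refine ⟨circleMap 0 1 (arccos t), ?_, ?_⟩
  · simpa using hρ
  · rw [joukowski_circleMap, cos_arccos ht.1 ht.2]

section HolomorphicExtension

variable {F : ℂ → ℂ} {f : ℝ → ℝ} {ρ M : ℝ}

lemma continuousOn_Icc_of_differentiableAt_bernsteinEllipse (hρ : 1 ≤ ρ)
    (hF : ∀ w ∈ bernsteinEllipse ρ, DifferentiableAt ℂ F w)
    (hf : ∀ t ∈ Icc (-1 : ℝ) 1, F t = f t) : ContinuousOn f (Icc (-1) 1) := by
  have hre : ContinuousOn (fun t : ℝ => (F t).re) (Icc (-1) 1) := fun t ht =>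
    (Complex.continuous_re.continuousAt.comp
      ((hF t (ofReal_mem_bernsteinEllipse hρ ht)).continuousAt.comp
        Complex.continuous_ofReal.continuousAt)).continuousWithinAt
  exact hre.congr fun t ht => by simp only [hf t ht, Complex.ofReal_re]

theorem abs_chebCoeff_le (hρ : 1 ≤ ρ)
    (hF : ∀ w ∈ bernsteinEllipse ρ, DifferentiableAt ℂ F w)
    (hM : ∀ w ∈ bernsteinEllipse ρ, ‖F w‖ ≤ M)
    (hf : ∀ t ∈ Icc (-1 : ℝ) 1, F t = f t) (n : ℕ) :
    |chebCoeff f n| ≤ 2 * (M * ρ ^ (-(n : ℤ))) := by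
  have pullback_eq : (fun θ => (f (cos θ) : ℂ)) = fun θ => F (joukowski (circleMap 0 1 θ)) :=
    funext fun θ => by rw [joukowski_circleMap, hf _ (cos_mem_Icc θ)]
  have hdiff : ∀ z ∈ closedBall (0 : ℂ) ρ \ ball 0 1,
      DifferentiableAt ℂ (fun z => F (joukowski z)) z := fun z hz =>
    (hF _ (mem_image_of_mem _ hz)).comp z
      (differentiableAt_joukowski fun hz0 => hz.2 (by simp [hz0]))
  have hbound : ∀ z ∈ sphere (0 : ℂ) ρ, ‖F (joukowski z)‖ ≤ M := fun z hz =>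
    hM _ <| mem_image_of_mem _ ⟨sphere_subset_closedBall hz, by
      rw [mem_ball_zero_iff, mem_sphere_zero_iff_norm.mp hz]
      exact hρ.not_gt⟩
  have hcont := continuousOn_Icc_of_differentiableAt_bernsteinEllipse hρ hF hf
  rw [abs_chebCoeff_eq_norm_fourierCoeffOn hcont, pullback_eq]
  gcongr
  · split_ifs <;> norm_num
  · exact norm_fourierCoeffOn_comp_circleMap_le hρ hdiff hbound n

theorem chebNorm_sub_chebSum_le (hρ : 1 < ρ)
    (hF : ∀ w ∈ bernsteinEllipse ρ, DifferentiableAt ℂ F w)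
    (hM : ∀ w ∈ bernsteinEllipse ρ, ‖F w‖ ≤ M)
    (hf : ∀ t ∈ Icc (-1 : ℝ) 1, F t = f t) (k : ℕ) :
    chebNorm (fun t => f t - chebSum f k t) ≤
      √(2 * π / (ρ ^ 2 - 1)) * ρ ^ (-(k : ℤ)) * M :=
  chebNorm_sub_chebSum_le_of_abs_chebCoeff_le
    (continuousOn_Icc_of_differentiableAt_bernsteinEllipse hρ.le hF hf) hρ
    fun n _ => abs_chebCoeff_le hρ.le hF hM hf n

end HolomorphicExtension

lemma add_inv_div_two_lt_of_lt_add_sqrt {ρ x : ℝ} (hρ : 1 < ρ) (hx : ρ < x + √(x ^ 2 - 1)) :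
    (ρ + ρ⁻¹) / 2 < x := by
  rcases le_or_gt ρ x with hle | hlt
  · linarith [inv_lt_one_of_one_lt₀ hρ]
  · have hsq : (ρ - x) ^ 2 < x ^ 2 - 1 :=
      (lt_sqrt (sub_nonneg.mpr hlt.le)).mp (by linarith)
    have hρ_pos : 0 < ρ := one_pos.trans hρ
    rw [show (ρ + ρ⁻¹) / 2 = (ρ ^ 2 + 1) / (2 * ρ) by field_simp,
      div_lt_iff₀ (mul_pos two_pos hρ_pos)]
    linarith

lemma sub_mul_le_re_of_mem_bernsteinEllipse {ρ c h : ℝ} (hh : 0 ≤ h) {w : ℂ}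
    (hw : w ∈ bernsteinEllipse ρ) : c - h * ((ρ + ρ⁻¹) / 2) ≤ (c + h * w : ℂ).re := by
  have hre : -((ρ + ρ⁻¹) / 2) ≤ w.re :=
    (abs_le.mp ((Complex.abs_re_le_norm w).trans (norm_le_of_mem_bernsteinEllipse hw))).1
  rw [Complex.add_re, Complex.re_ofReal_mul, Complex.ofReal_re]
  linarith [mul_le_mul_of_nonneg_left hre hh]

theorem chebNorm_rpow_sub_chebSum_le {c h ρ p : ℝ} (hp : p ≤ 0) (hh : 0 ≤ h) (hρ : 1 < ρ)
    (hpos : 0 < c - h * ((ρ + ρ⁻¹) / 2)) (k : ℕ) :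
    chebNorm (fun t => (c + h * t) ^ p - chebSum (fun s => (c + h * s) ^ p) k t) ≤
      √(2 * π / (ρ ^ 2 - 1)) * ρ ^ (-(k : ℤ)) * (c - h * ((ρ + ρ⁻¹) / 2)) ^ p := by
  have hre {w : ℂ} (hw : w ∈ bernsteinEllipse ρ) :=
    sub_mul_le_re_of_mem_bernsteinEllipse (c := c) hh hw
  refine chebNorm_sub_chebSum_le (F := fun w => (c + h * w) ^ (p : ℂ)) hρ
    (fun w hw => ?_) (fun w hw => ?_) (fun t ht => ?_) k
  · exact DifferentiableAt.cpow_const (by fun_prop) (.inl (hpos.trans_le (hre hw)))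
  · rw [Complex.norm_cpow_real]
    exact rpow_le_rpow_of_nonpos hpos ((hre hw).trans (Complex.re_le_norm _)) hp
  · have ht_pos : 0 < c + h * t := by
      simpa using hpos.trans_le (hre (ofReal_mem_bernsteinEllipse hρ.le ht))
    rw [Complex.ofReal_cpow ht_pos.le]
    push_cast
    rfl

end

/-- Proposition 2.4 of the paper: for `g(t) = (c+ht)^{-1/2}` and `q(t) = (c+ht)^{-1}`
with `c = (a+b)/2`, `h = (b−a)/2`, `0 < a < b`, and any `1 < ρ < c/h + √((c/h)²−1)`,
the truncated Chebyshev expansions satisfy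
`‖g − g_{k₁}‖_C ≤ √(2π/(ρ²−1)) ρ^{−k₁}/√(c − h(ρ+ρ⁻¹)/2)` and
`‖q − q_{k₂}‖_C ≤ √(2π/(ρ²−1)) ρ^{−k₂}/(c − h(ρ+ρ⁻¹)/2)`. -/
theorem chebyshev_L2_bound_inv_sqrt_and_inv (a b c h ρ : ℝ)
    (ha : 0 < a) (hab : a < b)
    (hc : c = (a + b) / 2) (hh : h = (b - a) / 2)
    (hρ1 : 1 < ρ) (hρ2 : ρ < c / h + Real.sqrt ((c / h) ^ 2 - 1))
    (g q : ℝ → ℝ)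
    (hg : ∀ t : ℝ, g t = (c + h * t) ^ (-(1 / 2 : ℝ)))
    (hq : ∀ t : ℝ, q t = (c + h * t)⁻¹)
    (k₁ k₂ : ℕ) (γ β : ℕ → ℝ)
    (hγ : ∀ i : ℕ, γ i = ((2 - if i = 0 then 1 else 0) / Real.pi) *
      ∫ s in (-1 : ℝ)..1, g s * (Polynomial.Chebyshev.T ℝ i).eval s / Real.sqrt (1 - s ^ 2))
    (hβ : ∀ i : ℕ, β i = ((2 - if i = 0 then 1 else 0) / Real.pi) *
      ∫ s in (-1 : ℝ)..1, q s * (Polynomial.Chebyshev.T ℝ i).eval s / Real.sqrt (1 - s ^ 2))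
    (gk qk : ℝ → ℝ)
    (hgk : ∀ t : ℝ, gk t = ∑ i ∈ Finset.range (k₁ + 1),
      γ i * (Polynomial.Chebyshev.T ℝ i).eval t)
    (hqk : ∀ t : ℝ, qk t = ∑ i ∈ Finset.range (k₂ + 1),
      β i * (Polynomial.Chebyshev.T ℝ i).eval t) :
    chebNorm (fun t => g t - gk t) ≤
        Real.sqrt (2 * Real.pi / (ρ ^ 2 - 1)) * ρ ^ (-(k₁ : ℤ)) /
          Real.sqrt (c - h * ((ρ + ρ⁻¹) / 2)) ∧
    chebNorm (fun t => q t - qk t) ≤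
        Real.sqrt (2 * Real.pi / (ρ ^ 2 - 1)) * ρ ^ (-(k₂ : ℤ)) /
          (c - h * ((ρ + ρ⁻¹) / 2)) := by
  obtain rfl : γ = chebCoeff g := funext hγ
  obtain rfl : β = chebCoeff q := funext hβ
  obtain rfl : gk = chebSum g k₁ := funext hgk
  obtain rfl : qk = chebSum q k₂ := funext hqk
  obtain rfl : g = fun t => (c + h * t) ^ (-(1 / 2 : ℝ)) := funext hg
  obtain rfl : q = fun t => (c + h * t) ^ (-1 : ℝ) :=
    funext fun t => by rw [hq, Real.rpow_neg_one]
  have hh_pos : 0 < h := by linarith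
  have hpos : 0 < c - h * ((ρ + ρ⁻¹) / 2) := by
    have hlt := add_inv_div_two_lt_of_lt_add_sqrt hρ1 hρ2
    rwa [lt_div_iff₀' hh_pos, ← sub_pos] at hlt
  constructor
  · rw [div_eq_mul_inv _ √_, Real.sqrt_eq_rpow (c - _), ← Real.rpow_neg hpos.le]
    exact chebNorm_rpow_sub_chebSum_le (by norm_num) hh_pos.le hρ1 hpos k₁
  · rw [div_eq_mul_inv _ (c - _), ← Real.rpow_neg_one (c - _)]
    exact chebNorm_rpow_sub_chebSum_le (by norm_num) hh_pos.le hρ1 hpos k₂
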